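/- arXiv:2605.22451 — 4 statements merged into one kernel-verified Lean document; each statement's English description precedes it below -/
import Mathlib

section
/- Let f : ℝⁿ → ℝ be continuous with epigraph L, and let K ⊆ ℝⁿ × ℝ be a nonempty compact set with K ∩ L = ∅. Then for every x ∈ ℝⁿ there exists y ∈ ℝ with d((x,y),K) = d((x,y),L) (i.e., every vertical line contains an equidistant point) if and only if there exists a point (x₀,y₀) ∈ K such that y₀ < f(x) for all x ∈ ℝⁿ. -/
/-!
If `(x, y)` is at least as close to `K` as to `L`, compare its nearest point `q ∈ K` with the
lowest point of `L` on the vertical line at or above `(x, y)`: since `q ∉ L`, the height of `q` is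
less than `f x`. As `x` varies, a lowest point of the compact set `K` therefore lies below the whole
graph of `f`.

Conversely, let `p = (x₀, y₀) ∈ K` lie below the whole graph. Seen from a point far down the
vertical line through `x`, the points of `L` over the ball about `x` of radius `|x - x₀|` are
farther away than `p`, because `f` exceeds `y₀` by a uniform gap there; the other points of `L` are
at least as far as `p` both horizontally and vertically. Higher up, the line enters `L`, so the
intermediate value theorem gives an equidistant point in between.
-/

open Metric Set

noncomputable section

/-- `ℝⁿ × ℝ` with the Euclidean (ℓ²) metric. -/
abbrev EucProd (n : ℕ) := WithLp 2 (EuclideanSpace ℝ (Fin n) × ℝ)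

/-- The point of `ℝⁿ × ℝ` with first component `x` and last coordinate `y`. -/
def pt {n : ℕ} (x : EuclideanSpace ℝ (Fin n)) (y : ℝ) : EucProd n :=
  (WithLp.equiv 2 (EuclideanSpace ℝ (Fin n) × ℝ)).symm (x, y)

/-- The epigraph of `f : ℝⁿ → ℝ`, viewed as a subset of `ℝⁿ × ℝ`. -/
def epigraph {n : ℕ} (f : EuclideanSpace ℝ (Fin n) → ℝ) : Set (EucProd n) :=
  {p | f ((WithLp.equiv 2 (EuclideanSpace ℝ (Fin n) × ℝ)) p).1 ≤
      ((WithLp.equiv 2 (EuclideanSpace ℝ (Fin n) × ℝ)) p).2}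

section

open WithLp (toLp)

lemma exists_infDist_eq_iff_exists_infDist_le {T X : Type*} [TopologicalSpace T]
    [PreconnectedSpace T] [PseudoMetricSpace X] {γ : T → X} (hγ : Continuous γ) {K L : Set X}
    (hL : ∃ t, γ t ∈ L) :
    (∃ t, infDist (γ t) K = infDist (γ t) L) ↔ ∃ t, infDist (γ t) K ≤ infDist (γ t) L := by
  refine ⟨fun ⟨t, ht⟩ ↦ ⟨t, ht.le⟩, fun ⟨t, ht⟩ ↦ ?_⟩
  obtain ⟨s, hs⟩ := hL
  have hs_le : infDist (γ s) L ≤ infDist (γ s) K := (infDist_zero_of_mem hs).trans_le infDist_nonneg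
  exact intermediate_value_univ₂ ((continuous_infDist_pt K).comp hγ)
    ((continuous_infDist_pt L).comp hγ) ht hs_le

lemma prodL2_dist_sq {α β : Type*} [PseudoMetricSpace α] [PseudoMetricSpace β]
    (p q : WithLp 2 (α × β)) :
    dist p q ^ 2 = dist p.fst q.fst ^ 2 + dist p.snd q.snd ^ 2 := by
  rw [WithLp.prod_dist_eq_add (by norm_num), ENNReal.toReal_ofNat, ← Real.sqrt_eq_rpow,
    Real.sq_sqrt (by positivity), Real.rpow_two, Real.rpow_two]

/-- The epigraph of a real function on an arbitrary type `E`, as a subset of the `ℓ²` product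
`E × ℝ`. It carries the argument over to metric spaces `E`; for `E = ℝⁿ` it unfolds to
`epigraph f`. -/
def l2Epigraph {E : Type*} (f : E → ℝ) : Set (WithLp 2 (E × ℝ)) :=
  {p | f p.fst ≤ p.snd}

variable {E : Type*} {f : E → ℝ} {K : Set (WithLp 2 (E × ℝ))} {x : E}

lemma exists_mem_snd_lt_of_infDist_le [MetricSpace E] (hK : IsCompact K) (hne : K.Nonempty)
    (hdisj : Disjoint K (l2Epigraph f)) {y : ℝ}
    (hle : infDist (toLp 2 (x, y)) K ≤ infDist (toLp 2 (x, y)) (l2Epigraph f)) :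
    ∃ q ∈ K, q.snd < f x := by
  obtain ⟨q, hqK, hq⟩ := hK.exists_infDist_eq_dist hne (toLp 2 (x, y))
  refine ⟨q, hqK, ?_⟩
  by_contra! hfq
  have hproj : toLp 2 (x, max y (f x)) ∈ l2Epigraph f := le_max_right y (f x)
  have hdist : dist (toLp 2 (x, y)) q ≤ dist (toLp 2 (x, y)) (toLp 2 (x, max y (f x))) :=
    hq.symm.trans_le (hle.trans (infDist_le_dist_of_mem hproj))
  have hsq : dist x q.fst ^ 2 + (y - q.snd) ^ 2 ≤ (y - max y (f x)) ^ 2 := by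
    simpa [prodL2_dist_sq, Real.dist_eq] using pow_le_pow_left₀ dist_nonneg hdist 2
  have hvert : (y - max y (f x)) ^ 2 ≤ (y - q.snd) ^ 2 := by
    rcases le_total y (f x) with hy | hy
    · rw [max_eq_right hy]
      nlinarith
    · simpa [max_eq_left hy] using sq_nonneg (y - q.snd)
  have hfst : x = q.fst := dist_eq_zero.1 (pow_eq_zero_iff two_ne_zero |>.1
    (le_antisymm (by linarith) (sq_nonneg _)))
  exact disjoint_left.1 hdisj hqK (show f q.fst ≤ q.snd from hfst ▸ hfq)

section PseudoMetricSpace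

variable [PseudoMetricSpace E] {p : WithLp 2 (E × ℝ)}

lemma exists_forall_mem_l2Epigraph_dist_le {δ : ℝ} (hδ : 0 < δ) (hp : ∀ z, p.snd ≤ f z)
    (hgap : ∀ z ∈ closedBall x (dist x p.fst), p.snd + δ ≤ f z) :
    ∃ y, ∀ q ∈ l2Epigraph f, dist (toLp 2 (x, y)) p ≤ dist (toLp 2 (x, y)) q := by
  set R := dist x p.fst
  -- `t` solves `R² + t² = 2δt + t²`, which is at most `(t + δ)²`.
  set t := R ^ 2 / (2 * δ)
  have ht : 0 ≤ t := by positivity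
  have htR : 2 * δ * t = R ^ 2 := by simp only [t]; field_simp
  refine ⟨p.snd - t, fun q hq ↦ ?_⟩
  have hfq : f q.fst ≤ q.snd := hq
  suffices hsq : R ^ 2 + t ^ 2 ≤ dist x q.fst ^ 2 + (q.snd - (p.snd - t)) ^ 2 by
    refine (sq_le_sq₀ dist_nonneg dist_nonneg).1 ?_
    simp only [prodL2_dist_sq, WithLp.toLp_fst, WithLp.toLp_snd, Real.dist_eq, sq_abs]
    linarith
  rcases le_total (dist x q.fst) R with hnear | hfar
  · have hheight : t + δ ≤ q.snd - (p.snd - t) := by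
      linarith [hgap q.fst (mem_closedBall'.2 hnear)]
    calc R ^ 2 + t ^ 2 ≤ (t + δ) ^ 2 := by nlinarith
      _ ≤ (q.snd - (p.snd - t)) ^ 2 := by gcongr
      _ ≤ dist x q.fst ^ 2 + (q.snd - (p.snd - t)) ^ 2 := le_add_of_nonneg_left (sq_nonneg _)
  · have hheight : t ≤ q.snd - (p.snd - t) := by linarith [hp q.fst]
    exact add_le_add (pow_le_pow_left₀ dist_nonneg hfar 2) (pow_le_pow_left₀ ht hheight 2)

lemma exists_infDist_le_infDist_l2Epigraph [ProperSpace E] (hf : LowerSemicontinuous f)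
    (hpK : p ∈ K) (hp : ∀ z, p.snd < f z) (x : E) :
    ∃ y : ℝ, infDist (toLp 2 (x, y)) K ≤ infDist (toLp 2 (x, y)) (l2Epigraph f) := by
  obtain ⟨z₀, -, hz₀⟩ := (hf.lowerSemicontinuousOn _).exists_isMinOn
    ⟨x, mem_closedBall_self dist_nonneg⟩ (isCompact_closedBall x (dist x p.fst))
  obtain ⟨y, hy⟩ := exists_forall_mem_l2Epigraph_dist_le (sub_pos.2 (hp z₀)) (fun z ↦ (hp z).le)
    fun z hz ↦ (add_sub_cancel p.snd (f z₀)).trans_le (hz₀ hz)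
  have hne : (l2Epigraph f).Nonempty := ⟨toLp 2 (x, f x), le_refl (f x)⟩
  exact ⟨y, (infDist_le_dist_of_mem hpK).trans ((le_infDist hne).2 hy)⟩

end PseudoMetricSpace

theorem stmt1_general [MetricSpace E] [ProperSpace E] (hf : LowerSemicontinuous f)
    (hK : IsCompact K) (hne : K.Nonempty) (hdisj : Disjoint K (l2Epigraph f)) :
    (∀ x, ∃ y : ℝ, infDist (toLp 2 (x, y)) K = infDist (toLp 2 (x, y)) (l2Epigraph f)) ↔
      ∃ x₀ y₀, toLp 2 (x₀, y₀) ∈ K ∧ ∀ x, y₀ < f x := by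
  constructor
  · intro hequi
    obtain ⟨p, hpK, hp⟩ := hK.exists_isMinOn hne (f := WithLp.snd) (by fun_prop)
    refine ⟨p.fst, p.snd, hpK, fun x ↦ ?_⟩
    obtain ⟨y, hy⟩ := hequi x
    obtain ⟨q, hqK, hq⟩ := exists_mem_snd_lt_of_infDist_le hK hne hdisj hy.le
    exact (hp hqK).trans_lt hq
  · rintro ⟨x₀, y₀, hpK, hp⟩ x
    have hline : Continuous fun y : ℝ ↦ toLp 2 (x, y) := by fun_prop
    exact (exists_infDist_eq_iff_exists_infDist_le hline ⟨f x, le_refl (f x)⟩).2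
      (exists_infDist_le_infDist_l2Epigraph hf hpK hp x)

end

theorem stmt1 {n : ℕ} (f : EuclideanSpace ℝ (Fin n) → ℝ) (hf : Continuous f)
    (L : Set (EucProd n)) (hL : L = epigraph f)
    (K : Set (EucProd n)) (hKcp : IsCompact K) (hKne : K.Nonempty)
    (hdisj : K ∩ L = ∅) :
    (∀ x : EuclideanSpace ℝ (Fin n),
        ∃ y : ℝ, Metric.infDist (pt x y) K = Metric.infDist (pt x y) L) ↔
      ∃ (x₀ : EuclideanSpace ℝ (Fin n)) (y₀ : ℝ),
        pt x₀ y₀ ∈ K ∧ ∀ x, y₀ < f x := by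
  subst hL
  exact stmt1_general hf.lowerSemicontinuous hKcp hKne (disjoint_iff_inter_eq_empty.2 hdisj)

end
end

section
/- In the setting of finitely many positive-valued continuous functions fᵢ : ℝⁿ → ℝ (i ∈ I, I finite nonempty) with epigraphs Lᵢ, and a nonempty closed K ⊆ ℝⁿ × ℝ containing a point with nonpositive last coordinate and disjoint from each Lᵢ: if Gᵢ⁻(x) = Gᵢ⁺(x) for every i ∈ I at a point x ∈ ℝⁿ, then G_min⁺(x) = G_min⁻(x), where G_min± are the upper/lower equidistant functions associated with K and L := ∪_{i∈I} Lᵢ. Consequently, if for every i the equidistant set of K and Lᵢ is the graph of a function, then so is the equidistant set of K and L. -/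
open Metric Set

noncomputable section

/-- The upper equidistant function `G⁺` associated with the focal sets `K` and `L`:
`G⁺(x) = sup {y | d((x,y),K) = d((x,y),L)}`. -/
def Gplus {n : ℕ} (K L : Set (EucProd n)) (x : EuclideanSpace ℝ (Fin n)) : ℝ :=
  sSup {y : ℝ | Metric.infDist (pt x y) K = Metric.infDist (pt x y) L}

/-- The lower equidistant function `G⁻` associated with the focal sets `K` and `L`:
`G⁻(x) = inf {y | d((x,y),K) = d((x,y),L)}`. -/
def Gminus {n : ℕ} (K L : Set (EucProd n)) (x : EuclideanSpace ℝ (Fin n)) : ℝ :=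
  sInf {y : ℝ | Metric.infDist (pt x y) K = Metric.infDist (pt x y) L}

/-
On the vertical line over `x`, the distance to `K` is smaller than the distance to `L i` far down,
since some point of `K` lies lower than all of `L i`, and larger far up, where the line runs inside
`L i`. Hence if the two distances agree at only one height `c i`, then by the intermediate value
theorem the distance to `K` is the smaller one all the way below `c i` and the larger one all the
way above. The distance to `⋃ i, L i` is the minimum over `i` of the distances to the `L i`, so it
relates to the distance to `K` in the same way, with its single crossing at the least of the `c i`.
-/

open Filter WithLp

section Crossing

variable {α β ι : Type*}

/-- The graphs of `a` and `b` cross exactly once, at `c`, where `a` passes from below `b` to above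
`b`. With `a` and `b` the distances to `K` and to `L` along a vertical line, this says that the line
meets the equidistant set of `K` and `L` in a single point, at height `c`. -/
structure StrictlyCrossesAt [LT α] [LT β] (a b : α → β) (c : α) : Prop where
  eq : a c = b c
  lt_left : ∀ y < c, a y < b y
  lt_right : ∀ y > c, b y < a y

namespace StrictlyCrossesAt

theorem eq_iff [LinearOrder α] [Preorder β] {a b : α → β} {c y : α}
    (h : StrictlyCrossesAt a b c) : a y = b y ↔ y = c := by
  refine ⟨fun hy => ?_, fun hy => hy ▸ h.eq⟩
  rcases lt_trichotomy y c with hlt | heq | hgt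
  · exact absurd hy (h.lt_left y hlt).ne
  · exact heq
  · exact absurd hy (h.lt_right y hgt).ne'

theorem ciInf [ConditionallyCompleteLinearOrder α] [ConditionallyCompleteLinearOrder β]
    [Finite ι] [Nonempty ι] {a : α → β} {b : ι → α → β} {c : ι → α}
    (h : ∀ i, StrictlyCrossesAt a (b i) (c i)) :
    StrictlyCrossesAt a (fun y => ⨅ i, b i y) (⨅ i, c i) := by
  have ciInf_c_le i : ⨅ i, c i ≤ c i := ciInf_le (finite_range c).bddBelow i
  have ciInf_b_le y i : ⨅ i, b i y ≤ b i y := ciInf_le (finite_range (b · y)).bddBelow i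
  obtain ⟨j, hj⟩ := exists_eq_ciInf_of_finite (f := c)
  refine ⟨le_antisymm (le_ciInf fun i => ?_) ?_, fun y hy => ?_, fun y hy => ?_⟩
  · rcases (ciInf_c_le i).lt_or_eq with hlt | heq
    · exact ((h i).lt_left _ hlt).le
    · exact ((h i).eq_iff.2 heq).le
  · exact (ciInf_b_le _ j).trans ((h j).eq_iff.2 hj.symm).ge
  · obtain ⟨i, hi⟩ := exists_eq_ciInf_of_finite (f := fun i => b i y)
    exact ((h i).lt_left y (hy.trans_le (ciInf_c_le i))).trans_eq hi
  · exact (ciInf_b_le y j).trans_lt ((h j).lt_right y (hj.trans_lt hy))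

end StrictlyCrossesAt

section Coincidence

variable [ConditionallyCompleteLinearOrder α] [DenselyOrdered α] [TopologicalSpace α]
  [OrderTopology α] [LinearOrder β] [TopologicalSpace β] [OrderClosedTopology β] {a b : α → β}

theorem exists_le_eq_of_eventually_atBot_lt (ha : Continuous a) (hb : Continuous b)
    (hbot : ∀ᶠ y in atBot, a y < b y) {v : α} (hv : b v ≤ a v) : ∃ z ≤ v, a z = b z := by
  have : Nonempty α := ⟨v⟩
  obtain ⟨u, hu, huv⟩ := (hbot.and (eventually_le_atBot v)).exists
  obtain ⟨z, hz, hzeq⟩ := isPreconnected_Icc.intermediate_value₂ (left_mem_Icc.2 huv)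
    (right_mem_Icc.2 huv) ha.continuousOn hb.continuousOn hu.le hv
  exact ⟨z, hz.2, hzeq⟩

theorem exists_ge_eq_of_eventually_atTop_lt (ha : Continuous a) (hb : Continuous b)
    (htop : ∀ᶠ y in atTop, b y < a y) {u : α} (hu : a u ≤ b u) : ∃ z ≥ u, a z = b z := by
  have : Nonempty α := ⟨u⟩
  obtain ⟨v, hv, huv⟩ := (htop.and (eventually_ge_atTop u)).exists
  obtain ⟨z, hz, hzeq⟩ := isPreconnected_Icc.intermediate_value₂ (left_mem_Icc.2 huv)
    (right_mem_Icc.2 huv) ha.continuousOn hb.continuousOn hu hv.le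
  exact ⟨z, hz.1, hzeq⟩

theorem exists_strictlyCrossesAt [Nonempty α] (ha : Continuous a) (hb : Continuous b)
    (hbot : ∀ᶠ y in atBot, a y < b y) (htop : ∀ᶠ y in atTop, b y < a y)
    (huniq : {y | a y = b y}.Subsingleton) : ∃ c, StrictlyCrossesAt a b c := by
  obtain ⟨c, hc⟩ : ∃ c, a c = b c := by
    obtain ⟨u, hu⟩ := hbot.exists
    obtain ⟨c, -, hc⟩ := exists_ge_eq_of_eventually_atTop_lt ha hb htop hu.le
    exact ⟨c, hc⟩
  refine ⟨c, hc, fun y hy => ?_, fun y hy => ?_⟩ <;> by_contra! hle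
  · obtain ⟨z, hzy, hz⟩ := exists_le_eq_of_eventually_atBot_lt ha hb hbot hle
    exact (hzy.trans_lt hy).ne (huniq hz hc)
  · obtain ⟨z, hyz, hz⟩ := exists_ge_eq_of_eventually_atTop_lt ha hb htop hle
    exact (hy.trans_le hyz).ne' (huniq hz hc)

end Coincidence

theorem bddBelow_of_eventually_atBot_notMem [LinearOrder α] [Nonempty α] {s : Set α}
    (h : ∀ᶠ y in atBot, y ∉ s) : BddBelow s := by
  obtain ⟨u, hu⟩ := eventually_atBot.1 h
  exact ⟨u, fun y hy => le_of_not_ge fun hyu => hu y hyu hy⟩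

theorem bddAbove_of_eventually_atTop_notMem [LinearOrder α] [Nonempty α] {s : Set α}
    (h : ∀ᶠ y in atTop, y ∉ s) : BddAbove s := by
  obtain ⟨u, hu⟩ := eventually_atTop.1 h
  exact ⟨u, fun y hy => le_of_not_ge fun huy => hu y huy hy⟩

theorem subsingleton_of_csInf_eq_csSup [ConditionallyCompleteLattice α] {s : Set α}
    (hbelow : BddBelow s) (habove : BddAbove s) (h : sInf s = sSup s) : s.Subsingleton := by
  have hs : s ⊆ Icc (sInf s) (sSup s) := subset_Icc_csInf_csSup hbelow habove
  rw [h, Icc_self] at hs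
  exact subsingleton_singleton.anti hs

end Crossing

section InfDist

variable {X : Type*} {ι : Sort*} [PseudoMetricSpace X]

theorem infDist_iUnion {L : ι → Set X} (hL : ∀ i, (L i).Nonempty) (p : X) :
    infDist p (⋃ i, L i) = ⨅ i, infDist p (L i) := by
  simp only [infDist, infEDist_iUnion]
  exact ENNReal.toReal_iInf fun i => infEDist_ne_top (hL i)

theorem infDist_lt_infDist_of_mem_of_disjoint {K L : Set X} (hK : IsClosed K) (hKne : K.Nonempty)
    (hdisj : Disjoint K L) {p : X} (hp : p ∈ L) : infDist p L < infDist p K := by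
  rw [infDist_zero_of_mem hp]
  exact (hK.notMem_iff_infDist_pos hKne).1 (hdisj.notMem_of_mem_right hp)

end InfDist

instance properSpace_withLp_prod {E F : Type*} [PseudoMetricSpace E] [PseudoMetricSpace F]
    [ProperSpace E] [ProperSpace F] (p : ENNReal) [Fact (1 ≤ p)] : ProperSpace (WithLp p (E × F)) :=
  ⟨fun u r => ((isCompact_closedBall u.ofLp r).image
    (prod_continuous_toLp p E F)).of_isClosed_subset isClosed_closedBall fun v hv =>
      ⟨v.ofLp, mem_closedBall.2 (((prod_lipschitzWith_ofLp p E F).dist_le_mul v u).trans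
        (by simpa using hv)), rfl⟩⟩

section VerticalLine

variable {E ι : Type*} [PseudoMetricSpace E]

theorem dist_sq_eq_of_L2 (p q : WithLp 2 (E × ℝ)) :
    dist p q ^ 2 = dist p.fst q.fst ^ 2 + (p.snd - q.snd) ^ 2 := by
  have hnonneg : 0 ≤ dist p.fst q.fst ^ 2 + dist p.snd q.snd ^ 2 := by positivity
  rw [prod_dist_eq_add (by norm_num), ← sq_abs (p.snd - q.snd), ← Real.dist_eq]
  simp only [ENNReal.toReal_ofNat, Real.rpow_ofNat]
  rw [← Real.sqrt_eq_rpow, Real.sq_sqrt hnonneg]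

theorem dist_toLp_lt_dist_toLp_of_snd_lt {x : E} {y h : ℝ} {p q : WithLp 2 (E × ℝ)}
    (hy : y ≤ p.snd) (hyh : dist x p.fst ^ 2 < 2 * (h - p.snd) * (p.snd - y))
    (hpq : p.snd < q.snd) (hq : dist x q.fst ≤ dist x p.fst → h ≤ q.snd) :
    dist (toLp 2 (x, y)) p < dist (toLp 2 (x, y)) q := by
  refine lt_of_pow_lt_pow_left₀ 2 dist_nonneg ?_
  simp only [dist_sq_eq_of_L2]
  rcases le_or_gt (dist x q.fst) (dist x p.fst) with hnear | hfar
  · have hgap : 2 * (h - p.snd) * (p.snd - y) ≤ 2 * (q.snd - p.snd) * (p.snd - y) :=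
      mul_le_mul_of_nonneg_right (by linarith [hq hnear]) (sub_nonneg.2 hy)
    calc dist x p.fst ^ 2 + (y - p.snd) ^ 2
        < 2 * (q.snd - p.snd) * (p.snd - y) + (y - p.snd) ^ 2 := by linarith
      _ = (y - q.snd) ^ 2 - (q.snd - p.snd) ^ 2 := by ring
      _ ≤ dist x q.fst ^ 2 + (y - q.snd) ^ 2 := by
        linarith [sq_nonneg (dist x q.fst), sq_nonneg (q.snd - p.snd)]
  · have hvert : (y - p.snd) ^ 2 ≤ (y - q.snd) ^ 2 := by nlinarith
    have hhoriz : dist x p.fst ^ 2 < dist x q.fst ^ 2 := by gcongr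
    exact add_lt_add_of_lt_of_le hhoriz hvert

/-- The heights at which the vertical line over `x` meets the equidistant set `{K = L}`; its
supremum and infimum are `G⁺(x)` and `G⁻(x)`. -/
def equidistantHeights (K L : Set (WithLp 2 (E × ℝ))) (x : E) : Set ℝ :=
  {y | infDist (toLp 2 (x, y)) K = infDist (toLp 2 (x, y)) L}

theorem subsingleton_equidistantHeights_of_csInf_eq_csSup {K L : Set (WithLp 2 (E × ℝ))} {x : E}
    (hbot : ∀ᶠ y in atBot, infDist (toLp 2 (x, y)) K < infDist (toLp 2 (x, y)) L)
    (htop : ∀ᶠ y in atTop, infDist (toLp 2 (x, y)) L < infDist (toLp 2 (x, y)) K)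
    (h : sInf (equidistantHeights K L x) = sSup (equidistantHeights K L x)) :
    (equidistantHeights K L x).Subsingleton :=
  subsingleton_of_csInf_eq_csSup
    (bddBelow_of_eventually_atBot_notMem (hbot.mono fun _ hy => hy.ne))
    (bddAbove_of_eventually_atTop_notMem (htop.mono fun _ hy => hy.ne')) h

theorem existsUnique_mem_equidistantHeights_iUnion [Finite ι] [Nonempty ι]
    {K : Set (WithLp 2 (E × ℝ))} {L : ι → Set (WithLp 2 (E × ℝ))} (hLne : ∀ i, (L i).Nonempty)
    {x : E}
    (hbot : ∀ i, ∀ᶠ y in atBot, infDist (toLp 2 (x, y)) K < infDist (toLp 2 (x, y)) (L i))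
    (htop : ∀ i, ∀ᶠ y in atTop, infDist (toLp 2 (x, y)) (L i) < infDist (toLp 2 (x, y)) K)
    (hsub : ∀ i, (equidistantHeights K (L i) x).Subsingleton) :
    ∃! y, y ∈ equidistantHeights K (⋃ i, L i) x := by
  have hcont (S : Set (WithLp 2 (E × ℝ))) : Continuous fun y : ℝ => infDist (toLp 2 (x, y)) S :=
    (continuous_infDist_pt S).comp (by fun_prop)
  choose c hc using fun i =>
    exists_strictlyCrossesAt (hcont K) (hcont (L i)) (hbot i) (htop i) (hsub i)
  have hcross := StrictlyCrossesAt.ciInf hc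
  simp only [← infDist_iUnion hLne] at hcross
  exact ⟨⨅ i, c i, hcross.eq, fun y hy => hcross.eq_iff.1 hy⟩

variable [ProperSpace E]

theorem exists_gt_forall_mem_le_snd {L : Set (WithLp 2 (E × ℝ))} (hL : IsClosed L) {m : ℝ}
    (hm : ∀ q ∈ L, m < q.snd) (x : E) (r : ℝ) :
    ∃ h > m, ∀ q ∈ L, dist x q.fst ≤ r → h ≤ q.snd := by
  have hcompact : IsCompact (toLp 2 '' (closedBall x r ×ˢ Icc m (m + 1)) ∩ L) :=
    (((isCompact_closedBall x r).prod isCompact_Icc).image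
      (prod_continuous_toLp 2 E ℝ)).inter_right hL
  obtain ⟨h, hmh, hle⟩ := hcompact.exists_forall_le' (f := WithLp.snd) (by fun_prop)
    fun q hq => hm q hq.2
  refine ⟨min h (m + 1), lt_min hmh (lt_add_one m), fun q hq hxq => ?_⟩
  rcases le_total q.snd (m + 1) with hlow | hhigh
  · have hmem : q.ofLp ∈ closedBall x r ×ˢ Icc m (m + 1) :=
      ⟨by rwa [mem_closedBall, dist_comm], (hm q hq).le, hlow⟩
    exact (min_le_left _ _).trans (hle q ⟨⟨q.ofLp, hmem, rfl⟩, hq⟩)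
  · exact (min_le_right _ _).trans hhigh

theorem eventually_atBot_infDist_lt_infDist {K L : Set (WithLp 2 (E × ℝ))} (hL : IsClosed L)
    (hLne : L.Nonempty) {p : WithLp 2 (E × ℝ)} (hp : p ∈ K) (hpL : ∀ q ∈ L, p.snd < q.snd)
    (x : E) : ∀ᶠ y in atBot, infDist (toLp 2 (x, y)) K < infDist (toLp 2 (x, y)) L := by
  obtain ⟨h, hgt, hle⟩ := exists_gt_forall_mem_le_snd hL hpL x (dist x p.fst)
  have hpos : 0 < 2 * (h - p.snd) := by linarith
  filter_upwards [eventually_le_atBot p.snd,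
    eventually_lt_atBot (p.snd - dist x p.fst ^ 2 / (2 * (h - p.snd)))] with y hy hylow
  have hyh : dist x p.fst ^ 2 < 2 * (h - p.snd) * (p.snd - y) :=
    (div_lt_iff₀' hpos).1 (lt_sub_comm.1 hylow)
  obtain ⟨q, hq, hqdist⟩ := hL.exists_infDist_eq_dist hLne (toLp 2 (x, y))
  calc infDist (toLp 2 (x, y)) K
      ≤ dist (toLp 2 (x, y)) p := infDist_le_dist_of_mem hp
    _ < dist (toLp 2 (x, y)) q := dist_toLp_lt_dist_toLp_of_snd_lt hy hyh (hpL q hq) (hle q hq)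
    _ = infDist (toLp 2 (x, y)) L := hqdist.symm

theorem stmt7_general [Finite ι] [Nonempty ι] {K : Set (WithLp 2 (E × ℝ))}
    {L : ι → Set (WithLp 2 (E × ℝ))} (hK : IsClosed K) (hL : ∀ i, IsClosed (L i))
    {p : WithLp 2 (E × ℝ)} (hp : p ∈ K) (hpL : ∀ i, ∀ q ∈ L i, p.snd < q.snd)
    (hup : ∀ i x, ∀ᶠ y in atTop, toLp 2 (x, y) ∈ L i) (hdisj : ∀ i, Disjoint K (L i)) :
    (∀ x, (∀ i, sInf (equidistantHeights K (L i) x) = sSup (equidistantHeights K (L i) x)) →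
        sSup (equidistantHeights K (⋃ i, L i) x) = sInf (equidistantHeights K (⋃ i, L i) x)) ∧
      ((∀ i x, ∃! y, y ∈ equidistantHeights K (L i) x) →
        ∀ x, ∃! y, y ∈ equidistantHeights K (⋃ i, L i) x) := by
  have hLne i : (L i).Nonempty := let ⟨_, hy⟩ := (hup i p.fst).exists; ⟨_, hy⟩
  have hbot i x := eventually_atBot_infDist_lt_infDist (hL i) (hLne i) hp (hpL i) x
  have htop i x := (hup i x).mono fun _ hy =>
    infDist_lt_infDist_of_mem_of_disjoint hK ⟨p, hp⟩ (hdisj i) hy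
  have hunique x := existsUnique_mem_equidistantHeights_iUnion hLne (hbot · x) (htop · x)
  refine ⟨fun x h => ?_, fun h x => hunique x fun i => (h i x).setSubsingleton⟩
  obtain ⟨c, hc⟩ := singleton_iff_unique_mem.2 <| hunique x fun i =>
    subsingleton_equidistantHeights_of_csInf_eq_csSup (hbot i x) (htop i x) (h i)
  rw [hc, csSup_singleton, csInf_singleton]

end VerticalLine

theorem isClosed_epigraph {n : ℕ} {f : EuclideanSpace ℝ (Fin n) → ℝ}
    (hf : LowerSemicontinuous f) : IsClosed (epigraph f) :=
  hf.isClosed_epigraph.preimage (prod_continuous_ofLp 2 _ _)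

theorem stmt7 {n : ℕ} (I : Type) [Fintype I] [Nonempty I]
    (f : I → EuclideanSpace ℝ (Fin n) → ℝ)
    (hf : ∀ i, Continuous (f i)) (hfpos : ∀ i x, 0 < f i x)
    (L : I → Set (EucProd n)) (hL : ∀ i, L i = epigraph (f i))
    (K : Set (EucProd n)) (hKcl : IsClosed K) (hKne : K.Nonempty)
    (x₀ : EuclideanSpace ℝ (Fin n)) (y₀ : ℝ) (hx₀ : pt x₀ y₀ ∈ K) (hy₀ : y₀ ≤ 0)
    (hdisj : ∀ i, K ∩ L i = ∅)
    (Lmin : Set (EucProd n)) (hLmin : Lmin = ⋃ i, L i) :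
    (∀ x : EuclideanSpace ℝ (Fin n),
        (∀ i, Gminus K (L i) x = Gplus K (L i) x) →
          Gplus K Lmin x = Gminus K Lmin x) ∧
      ((∀ i, ∀ x : EuclideanSpace ℝ (Fin n),
          ∃! y : ℝ, Metric.infDist (pt x y) K = Metric.infDist (pt x y) (L i)) →
        ∀ x : EuclideanSpace ℝ (Fin n),
          ∃! y : ℝ, Metric.infDist (pt x y) K = Metric.infDist (pt x y) Lmin) := by
  obtain rfl : L = fun i => epigraph (f i) := funext hL
  subst hLmin
  exact stmt7_general hKcl (fun i => isClosed_epigraph (hf i).lowerSemicontinuous) hx₀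
    (fun i q hq => hy₀.trans_lt ((hfpos i q.fst).trans_le hq))
    (fun i x => eventually_ge_atTop (f i x)) (fun i => disjoint_iff_inter_eq_empty.2 (hdisj i))

end
end

section
/- Let f : ℝⁿ → ℝ be a continuous positive-valued function with epigraph L, let R > 0, and let K ⊆ ℝⁿ × ℝ be the closed ball of radius R centered at the origin; assume |x|² + f(x)² > R² for all x ∈ ℝⁿ (so K ∩ L = ∅). Then for every x ∈ ℝⁿ there is exactly one y ∈ ℝ with d((x,y),K) = d((x,y),L); i.e., the equidistant set {K=L} is the graph of a function over ℝⁿ. -/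
open Metric Set

noncomputable section

/-!
Fix `x` and move along the vertical line through `p = (x, y)`. Outside `K` we have
`d(p, K) = |p| - R`, so the equidistant points on this line satisfy `d(p, L) = |p| - R`.
As `L` is closed under upward translation, `d(p, L)` is antitone in `y`, while `|p| - R` strictly
increases on `y ≥ 0`. For `q = (u, v)` the difference `d(p, q)² - y² = |x - u|² + v² - 2yv` is
antitone in `y` as soon as `v ≥ 0`, hence so is `d(p, L)² - y²`, while
`(|p| - R)² - y² = |x|² + R² - 2R|p|` strictly increases on `y ≤ 0`; an equidistant point there
has `|p| - R = d(p, L) ≥ -y`, which forces `|x| ≥ R`, so `|p| - R ≥ 0` all along the line and the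
squares may be compared. So the line carries at most one equidistant point, and it carries one by
the intermediate value theorem.
-/

open WithLp (toLp)

theorem le_infDist_sq {X : Type*} [PseudoMetricSpace X] {s : Set X} {p : X} {c : ℝ}
    (hs : s.Nonempty) : c ≤ infDist p s ^ 2 ↔ ∀ q ∈ s, c ≤ dist p q ^ 2 := by
  simp only [← Real.sqrt_le_left infDist_nonneg, ← Real.sqrt_le_left dist_nonneg, le_infDist hs]

section Ball

variable {V : Type*} [SeminormedAddCommGroup V] {L : Set V} {R : ℝ}

theorem sub_norm_le_infDist (hL : L.Nonempty) (hout : ∀ q ∈ L, R ≤ ‖q‖) (p : V) :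
    R - ‖p‖ ≤ infDist p L := by
  refine (le_infDist hL).2 fun q hq ↦ ?_
  rw [dist_comm, dist_eq_norm]
  linarith [hout q hq, norm_sub_norm_le q p]

variable [NormedSpace ℝ V]

theorem infDist_closedBall (p c : V) (hR : 0 ≤ R) :
    infDist p (closedBall c R) = max (dist p c - R) 0 := by
  rw [infDist, ← cthickening_singleton c hR, infEDist_cthickening, infEDist_singleton,
    edist_dist, ← ENNReal.ofReal_sub _ hR, ENNReal.toReal_ofReal']

theorem infDist_eq_norm_sub_of_infDist_closedBall_eq (hR : 0 ≤ R) (hL : L.Nonempty)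
    (hout : ∀ q ∈ L, R ≤ ‖q‖) {p : V} (hp : infDist p (closedBall 0 R) = infDist p L) :
    infDist p L = ‖p‖ - R := by
  rw [infDist_closedBall p 0 hR, dist_zero_right] at hp
  have hle : R - ‖p‖ ≤ infDist p L := sub_norm_le_infDist hL hout p
  rcases le_or_gt R ‖p‖ with hRp | hpR
  · rw [← hp, max_eq_left (sub_nonneg.2 hRp)]
  · rw [max_eq_right (by linarith)] at hp
    linarith

end Ball

section VerticalLine

variable {E : Type*} [SeminormedAddCommGroup E] {L : Set (WithLp 2 (E × ℝ))} {R y z : ℝ}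

theorem norm_toLp_prod_sq (x : E) (y : ℝ) : ‖toLp 2 (x, y)‖ ^ 2 = ‖x‖ ^ 2 + y ^ 2 := by
  simp [WithLp.prod_norm_sq_eq_of_L2]

theorem dist_toLp_prod_sq (x u : E) (y v : ℝ) :
    dist (toLp 2 (x, y)) (toLp 2 (u, v)) ^ 2 = dist x u ^ 2 + (y - v) ^ 2 := by
  rw [dist_eq_norm, dist_eq_norm, ← norm_toLp_prod_sq]
  rfl

theorem norm_toLp_prod_lt_iff (x : E) :
    ‖toLp 2 (x, y)‖ < ‖toLp 2 (x, z)‖ ↔ |y| < |z| := by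
  rw [← sq_lt_sq₀ (norm_nonneg _) (norm_nonneg _), norm_toLp_prod_sq, norm_toLp_prod_sq,
    add_lt_add_iff_left, sq_lt_sq]

theorem antitone_infDist_toLp (hL : L.Nonempty) (hup : ∀ u : E, IsUpperSet {v | toLp 2 (u, v) ∈ L})
    (x : E) : Antitone fun y : ℝ ↦ infDist (toLp 2 (x, y)) L := by
  refine fun y z hyz ↦ (le_infDist hL).2 ?_
  rintro ⟨u, v⟩ hq
  have hmem : toLp 2 (u, v + (z - y)) ∈ L := hup u (by linarith) hq
  refine (infDist_le_dist_of_mem hmem).trans_eq ?_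
  rw [← sq_eq_sq₀ dist_nonneg dist_nonneg, dist_toLp_prod_sq, dist_toLp_prod_sq]
  ring

theorem antitone_infDist_toLp_sq_sub_sq (hL : L.Nonempty) (hpos : ∀ q ∈ L, 0 ≤ q.snd) (x : E) :
    Antitone fun y : ℝ ↦ infDist (toLp 2 (x, y)) L ^ 2 - y ^ 2 := by
  intro y z hyz
  suffices infDist (toLp 2 (x, z)) L ^ 2 - z ^ 2 + y ^ 2 ≤ infDist (toLp 2 (x, y)) L ^ 2 by
    linarith
  refine (le_infDist_sq hL).2 ?_
  rintro ⟨u, v⟩ hq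
  have hv : 0 ≤ v := hpos _ hq
  have hz : infDist (toLp 2 (x, z)) L ^ 2 ≤ dist x u ^ 2 + (z - v) ^ 2 :=
    dist_toLp_prod_sq x u z v ▸ (le_infDist_sq hL).1 le_rfl _ hq
  rw [dist_toLp_prod_sq]
  linarith [mul_le_mul_of_nonneg_right hyz hv]

theorem neg_le_infDist_toLp (hL : L.Nonempty) (hpos : ∀ q ∈ L, 0 ≤ q.snd) (x : E) (y : ℝ) :
    -y ≤ infDist (toLp 2 (x, y)) L := by
  refine (le_infDist hL).2 ?_
  rintro ⟨u, v⟩ hq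
  have hv : 0 ≤ v := hpos _ hq
  have hdist : |y - v| ≤ dist (toLp 2 (x, y)) (toLp 2 (u, v)) :=
    WithLp.dist_snd_le (toLp 2 (x, y)) (toLp 2 (u, v))
  linarith [neg_abs_le (y - v)]

theorem le_norm_of_infDist_toLp_eq (hL : L.Nonempty) (hpos : ∀ q ∈ L, 0 ≤ q.snd) (hR : 0 ≤ R)
    {x : E} (hy : y ≤ 0) (heq : infDist (toLp 2 (x, y)) L = ‖toLp 2 (x, y)‖ - R) : R ≤ ‖x‖ := by
  have hnorm : R - y ≤ ‖toLp 2 (x, y)‖ := by linarith [neg_le_infDist_toLp hL hpos x y]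
  have hsq : (R - y) ^ 2 ≤ ‖x‖ ^ 2 + y ^ 2 :=
    norm_toLp_prod_sq x y ▸ pow_le_pow_left₀ (by linarith) hnorm 2
  rw [← sq_le_sq₀ hR (norm_nonneg x)]
  linarith [mul_nonpos_of_nonneg_of_nonpos hR hy]

theorem infDist_toLp_lt_norm_sub_of_nonneg (hL : L.Nonempty)
    (hup : ∀ u : E, IsUpperSet {v | toLp 2 (u, v) ∈ L}) {x : E} (hy : 0 ≤ y) (hyz : y < z)
    (hle : infDist (toLp 2 (x, y)) L ≤ ‖toLp 2 (x, y)‖ - R) :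
    infDist (toLp 2 (x, z)) L < ‖toLp 2 (x, z)‖ - R := by
  have hnorm : ‖toLp 2 (x, y)‖ < ‖toLp 2 (x, z)‖ :=
    (norm_toLp_prod_lt_iff x).2 (by rwa [abs_of_nonneg hy, abs_of_nonneg (hy.trans hyz.le)])
  linarith [antitone_infDist_toLp hL hup x hyz.le]

theorem infDist_toLp_lt_norm_sub_of_nonpos (hL : L.Nonempty) (hpos : ∀ q ∈ L, 0 ≤ q.snd)
    (hR : 0 < R) {x : E} (hz : z ≤ 0) (hyz : y < z)
    (heq : infDist (toLp 2 (x, y)) L = ‖toLp 2 (x, y)‖ - R) :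
    infDist (toLp 2 (x, z)) L < ‖toLp 2 (x, z)‖ - R := by
  have hx : R ≤ ‖x‖ := le_norm_of_infDist_toLp_eq hL hpos hR.le (hyz.le.trans hz) heq
  have hRz : R ≤ ‖toLp 2 (x, z)‖ := hx.trans (WithLp.norm_fst_le _ (toLp 2 (x, z)))
  have hnorm : ‖toLp 2 (x, z)‖ < ‖toLp 2 (x, y)‖ :=
    (norm_toLp_prod_lt_iff x).2 (by
      rwa [abs_of_nonpos hz, abs_of_nonpos (hyz.le.trans hz), neg_lt_neg_iff])
  refine lt_of_pow_lt_pow_left₀ 2 (sub_nonneg.2 hRz) ?_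
  calc
    infDist (toLp 2 (x, z)) L ^ 2 ≤ infDist (toLp 2 (x, y)) L ^ 2 - y ^ 2 + z ^ 2 := by
      linarith [antitone_infDist_toLp_sq_sub_sq hL hpos x hyz.le]
    _ = ‖x‖ ^ 2 + R ^ 2 - 2 * (R * ‖toLp 2 (x, y)‖) + z ^ 2 := by
      rw [heq]
      linarith [norm_toLp_prod_sq x y]
    _ < ‖x‖ ^ 2 + R ^ 2 - 2 * (R * ‖toLp 2 (x, z)‖) + z ^ 2 := by gcongr
    _ = (‖toLp 2 (x, z)‖ - R) ^ 2 := by linarith [norm_toLp_prod_sq x z]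

theorem infDist_toLp_lt_norm_sub (hL : L.Nonempty)
    (hup : ∀ u : E, IsUpperSet {v | toLp 2 (u, v) ∈ L}) (hpos : ∀ q ∈ L, 0 ≤ q.snd)
    (hR : 0 < R) {x : E} (hyz : y < z)
    (heq : infDist (toLp 2 (x, y)) L = ‖toLp 2 (x, y)‖ - R) :
    infDist (toLp 2 (x, z)) L < ‖toLp 2 (x, z)‖ - R := by
  rcases le_or_gt 0 y with hy | hy
  · exact infDist_toLp_lt_norm_sub_of_nonneg hL hup hy hyz heq.le
  rcases le_or_gt z 0 with hz | hz
  · exact infDist_toLp_lt_norm_sub_of_nonpos hL hpos hR hz hyz heq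
  have hzero : infDist (toLp 2 (x, 0)) L < ‖toLp 2 (x, (0 : ℝ))‖ - R :=
    infDist_toLp_lt_norm_sub_of_nonpos hL hpos hR le_rfl hy heq
  exact infDist_toLp_lt_norm_sub_of_nonneg hL hup le_rfl hz hzero.le

variable [NormedSpace ℝ E]

theorem exists_infDist_closedBall_le_infDist (hL : L.Nonempty) (hpos : ∀ q ∈ L, 0 ≤ q.snd)
    (hR : 0 < R) (x : E) :
    ∃ y : ℝ, infDist (toLp 2 (x, y)) (closedBall 0 R) ≤ infDist (toLp 2 (x, y)) L := by
  -- With `t = ‖x‖² / (2R)`, the point `(x, -t)` has norm at most `R + t` since `‖x‖² = 2Rt`.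
  obtain ⟨t, ht, hxt⟩ : ∃ t, 0 ≤ t ∧ ‖x‖ ^ 2 = 2 * R * t :=
    ⟨‖x‖ ^ 2 / (2 * R), by positivity, by field_simp⟩
  have hnorm : ‖toLp 2 (x, -t)‖ ≤ R + t := by
    rw [← sq_le_sq₀ (norm_nonneg _) (by positivity), norm_toLp_prod_sq, hxt]
    linarith [sq_nonneg R]
  refine ⟨-t, le_trans ?_ (neg_le_infDist_toLp hL hpos x (-t))⟩
  rw [infDist_closedBall _ _ hR.le, dist_zero_right, neg_neg]
  exact max_le (by linarith) ht

theorem exists_infDist_le_infDist_closedBall (hL : L.Nonempty)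
    (hup : ∀ u : E, IsUpperSet {v | toLp 2 (u, v) ∈ L}) (hR : 0 ≤ R) (x : E) :
    ∃ y : ℝ, infDist (toLp 2 (x, y)) L ≤ infDist (toLp 2 (x, y)) (closedBall 0 R) := by
  obtain ⟨⟨u, v⟩, hq⟩ := hL
  set y : ℝ := max v (dist x u + R)
  have hmem : toLp 2 (u, y) ∈ L := hup u (le_max_left _ _) hq
  have hdist : dist (toLp 2 (x, y)) (toLp 2 (u, y)) = dist x u := by
    rw [← sq_eq_sq₀ dist_nonneg dist_nonneg, dist_toLp_prod_sq]
    ring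
  have hnorm : y ≤ ‖toLp 2 (x, y)‖ := le_of_abs_le (WithLp.norm_snd_le _ (toLp 2 (x, y)))
  refine ⟨y, (infDist_le_dist_of_mem hmem).trans ?_⟩
  rw [infDist_closedBall _ _ hR, dist_zero_right, hdist]
  exact le_max_of_le_left (by linarith [le_max_right v (dist x u + R)])

theorem exists_infDist_closedBall_eq_infDist (hL : L.Nonempty)
    (hup : ∀ u : E, IsUpperSet {v | toLp 2 (u, v) ∈ L}) (hpos : ∀ q ∈ L, 0 ≤ q.snd)
    (hR : 0 < R) (x : E) :
    ∃ y : ℝ, infDist (toLp 2 (x, y)) (closedBall 0 R) = infDist (toLp 2 (x, y)) L := by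
  have hcont (s : Set (WithLp 2 (E × ℝ))) : Continuous fun y : ℝ ↦ infDist (toLp 2 (x, y)) s :=
    (continuous_infDist_pt s).comp (by fun_prop)
  obtain ⟨a, ha⟩ := exists_infDist_closedBall_le_infDist hL hpos hR x
  obtain ⟨b, hb⟩ := exists_infDist_le_infDist_closedBall hL hup hR.le x
  exact intermediate_value_univ₂ (hcont _) (hcont _) ha hb

end VerticalLine

theorem stmt11_general {E : Type*} [SeminormedAddCommGroup E] [NormedSpace ℝ E]
    {L : Set (WithLp 2 (E × ℝ))} {R : ℝ} (hL : L.Nonempty)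
    (hup : ∀ u : E, IsUpperSet {v | toLp 2 (u, v) ∈ L}) (hpos : ∀ q ∈ L, 0 ≤ q.snd)
    (hR : 0 < R) (hout : ∀ q ∈ L, R ≤ ‖q‖) (x : E) :
    ∃! y : ℝ, infDist (toLp 2 (x, y)) (closedBall 0 R) = infDist (toLp 2 (x, y)) L := by
  have hnorm {y : ℝ} := infDist_eq_norm_sub_of_infDist_closedBall_eq (p := toLp 2 (x, y))
    hR.le hL hout
  obtain ⟨y, hy⟩ := exists_infDist_closedBall_eq_infDist hL hup hpos hR x
  refine ⟨y, hy, fun z hz ↦ ?_⟩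
  rcases lt_trichotomy z y with hzy | hzy | hyz
  · exact absurd (hnorm hy) (infDist_toLp_lt_norm_sub hL hup hpos hR hzy (hnorm hz)).ne
  · exact hzy
  · exact absurd (hnorm hz) (infDist_toLp_lt_norm_sub hL hup hpos hR hyz (hnorm hy)).ne

section Epigraph

variable {n : ℕ} {f : EuclideanSpace ℝ (Fin n) → ℝ}

theorem epigraph_nonempty : (epigraph f).Nonempty :=
  ⟨toLp 2 (0, f 0), le_refl (f 0)⟩

theorem le_norm_of_mem_epigraph {R : ℝ} (hf : ∀ x, 0 ≤ f x)
    (hout : ∀ x, R ^ 2 ≤ ‖x‖ ^ 2 + f x ^ 2) {q : EucProd n} (hq : q ∈ epigraph f) : R ≤ ‖q‖ := by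
  obtain ⟨x, y⟩ := q
  have hsq : f x ^ 2 ≤ y ^ 2 := pow_le_pow_left₀ (hf x) hq 2
  refine le_of_sq_le_sq ?_ (norm_nonneg _)
  linarith [hout x, norm_toLp_prod_sq x y]

end Epigraph

theorem stmt11 {n : ℕ} (f : EuclideanSpace ℝ (Fin n) → ℝ) (hf : Continuous f)
    (hfpos : ∀ x, 0 < f x)
    (L : Set (EucProd n)) (hL : L = epigraph f)
    (R : ℝ) (hR : 0 < R)
    (K : Set (EucProd n)) (hK : K = Metric.closedBall (0 : EucProd n) R)
    (hout : ∀ x : EuclideanSpace ℝ (Fin n), R ^ 2 < ‖x‖ ^ 2 + f x ^ 2) :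
    ∀ x : EuclideanSpace ℝ (Fin n),
      ∃! y : ℝ, Metric.infDist (pt x y) K = Metric.infDist (pt x y) L := by
  subst hL hK
  exact stmt11_general epigraph_nonempty (fun _ _ _ hvw hv ↦ le_trans hv hvw)
    (fun q hq ↦ (hfpos q.fst).le.trans hq) hR
    fun _ ↦ le_norm_of_mem_epigraph (fun x ↦ (hfpos x).le) fun x ↦ (hout x).le

end
end

section
/- Let f : ℝ → ℝ be positive-valued, convex and continuously differentiable, let R > 0, and define α(t) := (t f'(t) − f(t))/√(1 + f'(t)²) and C⁺ := {t > 0 : α(t) ≥ R}. Then either C⁺ is empty, or t₀⁺ := inf C⁺ satisfies t₀⁺ > 0 and (t₀⁺, ∞) ⊆ C⁺, i.e. every t > t₀⁺ satisfies α(t) ≥ R. -/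
open Metric Set

noncomputable section

/-!
`α t` is the signed distance from the origin to the tangent line at `(t, f t)`. For `s < t`, pass
from the tangent at `s` to the tangent at `t` by first rotating the line about `(s, f s)` up to the
larger slope `f' t`, then translating it downwards, since by convexity `(s, f s)` lies on or above
the tangent at `t`. Both moves do not decrease the signed distance once it is nonnegative: the
translation trivially, the rotation because the distance is at most `s`. Hence `C⁺` is an up-set,
and `R ≤ α t ≤ t` on it bounds its infimum below by `R`.
-/

section SignedDist

/-- The signed distance from the origin to the line of slope `m` through `(x, y)`, positive when the
origin lies strictly above the line. The paper's `α t` is `signedDistToLine t (f t) (deriv f t)`. -/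
def signedDistToLine (x y m : ℝ) : ℝ :=
  (x * m - y) / √(1 + m ^ 2)

theorem sqrt_one_add_sq_pos (m : ℝ) : 0 < √(1 + m ^ 2) := by
  positivity

theorem le_sqrt_one_add_sq (m : ℝ) : m ≤ √(1 + m ^ 2) :=
  Real.le_sqrt_of_sq_le (by linarith)

theorem sqrt_one_add_sq_le_add_sub {p q : ℝ} (hpq : p ≤ q) :
    √(1 + q ^ 2) ≤ √(1 + p ^ 2) + (q - p) := by
  have hp : p ≤ √(1 + p ^ 2) := le_sqrt_one_add_sq p
  have hsq : √(1 + p ^ 2) ^ 2 = 1 + p ^ 2 := Real.sq_sqrt (by positivity)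
  -- The square of the right-hand side exceeds `1 + q ^ 2` by twice this product.
  have hcross : 0 ≤ (q - p) * (√(1 + p ^ 2) - p) :=
    mul_nonneg (sub_nonneg.2 hpq) (sub_nonneg.2 hp)
  exact Real.sqrt_le_iff.2 ⟨by linarith [sqrt_one_add_sq_pos p], by linarith⟩

variable {x y m : ℝ}

theorem le_signedDistToLine_iff {r : ℝ} :
    r ≤ signedDistToLine x y m ↔ r * √(1 + m ^ 2) ≤ x * m - y :=
  le_div_iff₀ (sqrt_one_add_sq_pos m)

theorem signedDistToLine_le_abscissa (hx : 0 ≤ x) (hy : 0 ≤ y) : signedDistToLine x y m ≤ x :=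
  (div_le_iff₀ (sqrt_one_add_sq_pos m)).2 <| calc
    x * m - y ≤ x * m := sub_le_self _ hy
    _ ≤ x * √(1 + m ^ 2) := mul_le_mul_of_nonneg_left (le_sqrt_one_add_sq m) hx

theorem signedDistToLine_le_of_slope_le {p q : ℝ} (hx : 0 ≤ x) (hy : 0 ≤ y)
    (hnonneg : 0 ≤ signedDistToLine x y p) (hpq : p ≤ q) :
    signedDistToLine x y p ≤ signedDistToLine x y q := by
  have hdist : signedDistToLine x y p * √(1 + p ^ 2) ≤ x * p - y :=
    le_signedDistToLine_iff.1 le_rfl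
  rw [le_signedDistToLine_iff]
  calc signedDistToLine x y p * √(1 + q ^ 2)
      ≤ signedDistToLine x y p * (√(1 + p ^ 2) + (q - p)) :=
        mul_le_mul_of_nonneg_left (sqrt_one_add_sq_le_add_sub hpq) hnonneg
    _ = signedDistToLine x y p * √(1 + p ^ 2) + signedDistToLine x y p * (q - p) := mul_add _ _ _
    _ ≤ (x * p - y) + x * (q - p) :=
        add_le_add hdist (mul_le_mul_of_nonneg_right (signedDistToLine_le_abscissa hx hy)
          (sub_nonneg.2 hpq))
    _ = x * q - y := by ring

theorem signedDistToLine_le_of_point_above_line {x' y' : ℝ}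
    (habove : y' + m * (x - x') ≤ y) :
    signedDistToLine x y m ≤ signedDistToLine x' y' m :=
  div_le_div_of_nonneg_right (by linarith) (Real.sqrt_nonneg _)

end SignedDist

section Subgradient

/-- `g` selects a subgradient of `f` relative to `S` at each point of `S`. It plays the role of the
derivative, so that a convex `f` may have corners. -/
def IsSubgradientOn (S : Set ℝ) (f g : ℝ → ℝ) : Prop :=
  ∀ s ∈ S, ∀ t ∈ S, f s + g s * (t - s) ≤ f t

variable {S : Set ℝ} {f g : ℝ → ℝ}

theorem isSubgradientOn_deriv (hconv : ConvexOn ℝ S f)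
    (hdiff : ∀ s ∈ S, DifferentiableAt ℝ f s) : IsSubgradientOn S f (deriv f) := by
  intro s hs t ht
  rcases lt_trichotomy s t with hst | rfl | hts
  · have hslope := hconv.deriv_le_slope hs ht hst (hdiff s hs)
    rw [slope_def_field, le_div_iff₀ (sub_pos.2 hst)] at hslope
    linarith
  · simp
  · have hslope := hconv.slope_le_deriv ht hs hts (hdiff s hs)
    rw [slope_def_field, div_le_iff₀ (sub_pos.2 hts)] at hslope
    linarith

theorem IsSubgradientOn.monotoneOn (hg : IsSubgradientOn S f g) : MonotoneOn g S := by
  intro s hs t ht hst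
  rcases hst.eq_or_lt with rfl | hlt
  · rfl
  · have hs_line := hg s hs t ht
    have ht_line := hg t ht s hs
    exact le_of_mul_le_mul_right (by linarith) (sub_pos.2 hlt)

theorem IsSubgradientOn.signedDistToLine_mono (hg : IsSubgradientOn S f g) {s t : ℝ}
    (hs : s ∈ S) (ht : t ∈ S) (hst : s ≤ t) (hs0 : 0 ≤ s) (hfs : 0 ≤ f s)
    (hnonneg : 0 ≤ signedDistToLine s (f s) (g s)) :
    signedDistToLine s (f s) (g s) ≤ signedDistToLine t (f t) (g t) :=
  calc signedDistToLine s (f s) (g s)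
      ≤ signedDistToLine s (f s) (g t) :=
        signedDistToLine_le_of_slope_le hs0 hfs hnonneg (hg.monotoneOn hs ht hst)
    _ ≤ signedDistToLine t (f t) (g t) := signedDistToLine_le_of_point_above_line (hg t ht s hs)

end Subgradient

section CriticalParameters

/-- The set `C⁺` of positive critical parameters at level `R`, with `g` in the role of the
derivative of `f`. -/
def positiveCriticalParameters (f g : ℝ → ℝ) (R : ℝ) : Set ℝ :=
  {t | 0 < t ∧ R ≤ signedDistToLine t (f t) (g t)}

variable {f g : ℝ → ℝ} {R : ℝ}

theorem le_of_mem_positiveCriticalParameters (hf : ∀ t, 0 < t → 0 ≤ f t) {t : ℝ}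
    (ht : t ∈ positiveCriticalParameters f g R) : R ≤ t :=
  ht.2.trans (signedDistToLine_le_abscissa ht.1.le (hf t ht.1))

theorem mem_positiveCriticalParameters_of_le (hf : ∀ t, 0 < t → 0 ≤ f t)
    (hg : IsSubgradientOn (Ioi 0) f g) (hR : 0 ≤ R) {s t : ℝ}
    (hs : s ∈ positiveCriticalParameters f g R) (hst : s ≤ t) :
    t ∈ positiveCriticalParameters f g R := by
  obtain ⟨hs0, hRs⟩ := hs
  have ht0 : 0 < t := hs0.trans_le hst
  exact ⟨ht0, hRs.trans
    (hg.signedDistToLine_mono hs0 ht0 hst hs0.le (hf s hs0) (hR.trans hRs))⟩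

end CriticalParameters

theorem stmt14_general (f g : ℝ → ℝ) (hf : ∀ t, 0 < t → 0 ≤ f t)
    (hg : IsSubgradientOn (Ioi 0) f g) (R : ℝ) (hR : 0 ≤ R) :
    positiveCriticalParameters f g R = ∅ ∨
      (R ≤ sInf (positiveCriticalParameters f g R) ∧
        Ioi (sInf (positiveCriticalParameters f g R)) ⊆ positiveCriticalParameters f g R) := by
  refine (eq_empty_or_nonempty _).imp_right fun hne => ⟨?_, fun t ht => ?_⟩
  · exact le_csInf hne fun t ht => le_of_mem_positiveCriticalParameters hf ht
  · obtain ⟨s, hs, hst⟩ := exists_lt_of_csInf_lt hne ht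
    exact mem_positiveCriticalParameters_of_le hf hg hR hs hst.le

theorem stmt14 (f : ℝ → ℝ) (hfpos : ∀ t, 0 < f t)
    (hfconv : ConvexOn ℝ Set.univ f) (hfC1 : ContDiff ℝ 1 f)
    (R : ℝ) (hR : 0 < R)
    (α : ℝ → ℝ)
    (hα : ∀ s : ℝ, α s = (s * deriv f s - f s) / Real.sqrt (1 + deriv f s ^ 2))
    (C : Set ℝ) (hC : C = {t : ℝ | 0 < t ∧ R ≤ α t}) :
    C = ∅ ∨ (0 < sInf C ∧ ∀ t : ℝ, sInf C < t → R ≤ α t) := by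
  obtain rfl : α = fun t => signedDistToLine t (f t) (deriv f t) := funext hα
  have hsub : IsSubgradientOn (Ioi 0) f (deriv f) :=
    isSubgradientOn_deriv (hfconv.subset (subset_univ _) (convex_Ioi 0))
      fun t _ => hfC1.differentiable one_ne_zero t
  subst hC
  exact (stmt14_general f (deriv f) (fun t _ => (hfpos t).le) hsub R hR.le).imp_right
    fun ⟨hle, hsubset⟩ => ⟨hR.trans_le hle, fun _ ht => (hsubset ht).2⟩

end
end
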